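/- arXiv:2307.07827 — 3 statements merged into one kernel-verified Lean document; each statement's English description precedes it below -/
import Mathlib

section
/- Let H be a real separable Hilbert space with its Borel σ-algebra, and let μ and ν be Borel probability measures on H whose identity maps are Bochner integrable, with Bochner means m_μ = ∫ x dμ(x) and m_ν = ∫ x dν(x). Let v_1, …, v_q ∈ H be such that m_μ − m_ν lies in the linear span of {v_1, …, v_q}, and assume that μ ≠ ν implies m_μ ≠ m_ν. Define the continuous linear map T : H → ℝ^q by T(x) = (⟨v_1, x⟩, …, ⟨v_q, x⟩). Then the pushforward measures satisfy: μ.map T = ν.map T if and only if μ = ν. (Theorem 1: the dimension-reduced sequence has the same locations of distributional changes as the original sequence.) -/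
open RealInnerProductSpace MeasureTheory

/-!
Bochner integration commutes with continuous linear functionals, so the law of `T` determines the
numbers `⟪v k, m⟫`, where `m` is the mean. Equal pushforwards therefore make `m_μ - m_ν` orthogonal
to every `v k`, hence to the closed span of the `v k`. As it also lies in that closed span, it is
orthogonal to itself.
-/

section

open InnerProductSpace ProbabilityTheory

variable {𝕜 ι Ω Ω' H : Type*} [RCLike 𝕜]
  [MeasurableSpace Ω] [MeasurableSpace Ω'] {μ : Measure Ω} {ν : Measure Ω'}
  [NormedAddCommGroup H] [InnerProductSpace 𝕜 H]

theorem map_integral_eq_of_identDistrib {E F : Type*}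
    [NormedAddCommGroup E] [NormedSpace 𝕜 E] [NormedSpace ℝ E] [CompleteSpace E]
    [NormedAddCommGroup F] [NormedSpace 𝕜 F] [NormedSpace ℝ F] [CompleteSpace F]
    [MeasurableSpace F] [BorelSpace F] {f : Ω → E} {g : Ω' → E}
    (hf : Integrable f μ) (hg : Integrable g ν) (L : E →L[𝕜] F)
    (h : IdentDistrib (fun ω ↦ L (f ω)) (fun ω ↦ L (g ω)) μ ν) :
    L (∫ ω, f ω ∂μ) = L (∫ ω, g ω ∂ν) :=
  calc
    L (∫ ω, f ω ∂μ) = ∫ ω, L (f ω) ∂μ := (L.integral_comp_comm hf).symm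
    _ = ∫ ω, L (g ω) ∂ν := h.integral_eq
    _ = L (∫ ω, g ω ∂ν) := L.integral_comp_comm hg

theorem eq_of_sub_mem_closure_span_of_inner_eq {v : ι → H} {x y : H}
    (hmem : x - y ∈ (Submodule.span 𝕜 (Set.range v)).topologicalClosure)
    (h : ∀ k, ⟪v k, x⟫_𝕜 = ⟪v k, y⟫_𝕜) : x = y := by
  have hspan : Submodule.span 𝕜 (Set.range v) ≤ (𝕜 ∙ (x - y))ᗮ := by
    rw [Submodule.span_le, Set.range_subset_iff]
    intro k
    rw [SetLike.mem_coe, Submodule.mem_orthogonal_singleton_iff_inner_left, inner_sub_right, h,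
      sub_self]
  have hself : x - y ∈ (𝕜 ∙ (x - y))ᗮ :=
    Submodule.topologicalClosure_minimal _ hspan (Submodule.isClosed_orthogonal _) hmem
  rw [Submodule.mem_orthogonal_singleton_iff_inner_left, inner_self_eq_zero] at hself
  exact sub_eq_zero.mp hself

theorem integral_eq_of_identDistrib_inner [NormedSpace ℝ H] [CompleteSpace H]
    {f : Ω → H} {g : Ω' → H} (hf : Integrable f μ) (hg : Integrable g ν) {v : ι → H}
    (hmem : (∫ ω, f ω ∂μ) - ∫ ω, g ω ∂ν ∈ (Submodule.span 𝕜 (Set.range v)).topologicalClosure)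
    (h : IdentDistrib (fun ω k ↦ ⟪v k, f ω⟫_𝕜) (fun ω k ↦ ⟪v k, g ω⟫_𝕜) μ ν) :
    ∫ ω, f ω ∂μ = ∫ ω, g ω ∂ν :=
  eq_of_sub_mem_closure_span_of_inner_eq hmem fun k ↦
    map_integral_eq_of_identDistrib hf hg (innerSL 𝕜 (v k)) (h.comp (measurable_pi_apply k))

theorem measurable_inner_family [MeasurableSpace H] [OpensMeasurableSpace H] (v : ι → H) :
    Measurable fun x k ↦ ⟪v k, x⟫_𝕜 :=
  measurable_pi_lambda _ fun k ↦ (innerSL 𝕜 (v k)).continuous.measurable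

theorem stmt1_general [NormedSpace ℝ H] [CompleteSpace H] [MeasurableSpace H]
    [OpensMeasurableSpace H] {μ ν : Measure H}
    (hμ : Integrable (id : H → H) μ) (hν : Integrable (id : H → H) ν) (v : ι → H)
    (hspan : (∫ x, x ∂μ) - ∫ x, x ∂ν ∈ (Submodule.span 𝕜 (Set.range v)).topologicalClosure)
    (hchar : μ ≠ ν → ∫ x, x ∂μ ≠ ∫ x, x ∂ν) :
    μ.map (fun x k ↦ ⟪v k, x⟫_𝕜) = ν.map (fun x k ↦ ⟪v k, x⟫_𝕜) ↔ μ = ν := by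
  refine ⟨fun hmap ↦ ?_, fun h ↦ by rw [h]⟩
  have hT : Measurable fun x k ↦ ⟪v k, x⟫_𝕜 := measurable_inner_family v
  have hmean : ∫ x, x ∂μ = ∫ x, x ∂ν :=
    integral_eq_of_identDistrib_inner hμ hν hspan ⟨hT.aemeasurable, hT.aemeasurable, hmap⟩
  exact not_imp_not.mp hchar hmean

end

/-- Theorem 1: if the difference of the kernel mean elements of `μ` and `ν` lies in the
span of `v 1, …, v q`, and distributional changes are detectable through the mean elements
(characteristic-kernel property), then the pushforwards of `μ` and `ν` under the
dimension-reduction map `T x = (⟪v 1, x⟫, …, ⟪v q, x⟫)` coincide iff `μ = ν`. -/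
theorem stmt1 {H : Type*} [NormedAddCommGroup H] [InnerProductSpace ℝ H]
    [CompleteSpace H] [SecondCountableTopology H] [MeasurableSpace H] [BorelSpace H]
    {q : ℕ} (μ ν : Measure H) [IsProbabilityMeasure μ] [IsProbabilityMeasure ν]
    (hμ : Integrable (id : H → H) μ) (hν : Integrable (id : H → H) ν)
    (v : Fin q → H)
    (hspan : (∫ x, x ∂μ) - (∫ x, x ∂ν) ∈ Submodule.span ℝ (Set.range v))
    (hchar : μ ≠ ν → (∫ x, x ∂μ) ≠ (∫ x, x ∂ν))
    (T : H → (Fin q → ℝ)) (hT : ∀ x, T x = fun k => ⟪v k, x⟫) :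
    μ.map T = ν.map T ↔ μ = ν := by
  obtain rfl : T = fun x k ↦ ⟪v k, x⟫ := funext hT
  exact stmt1_general hμ hν v (Submodule.le_topologicalClosure _ hspan) hchar
end

section
/- Given a real inner product space H, vectors μ_0, …, μ_s ∈ H and positive weights c_0, …, c_s, let the corrected operator Δ be defined by Δh = Σ_{i,j=0}^{s} c_i c_j ⟨μ_i − μ_j, h⟩ (μ_i − μ_j). Then the linear span of the set of eigenvectors of Δ associated with nonzero eigenvalues, i.e. the span of {v ∈ H : ∃ λ ≠ 0, Δv = λv}, equals the linear span of {μ_i − μ_j : 0 ≤ i, j ≤ s}. (Theorem 2, second part: the eigenfunctions of Δ^kernel associated with its nonzero eigenvalues span the central distribution deviation subspace.) -/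
open RealInnerProductSpace

/-!
For positive weights `w i`, the operator `T = ∑ i, w i • v i ⊗ v i` is symmetric, and
`⟪h, T h⟫ = ∑ i, w i * ‖⟪v i, h⟫‖ ^ 2` shows that its kernel is the orthogonal complement of the
span of the `v i`. The kernel of a symmetric operator is also the orthogonal complement of its
range; both spaces being finite-dimensional, the range is that span. Finally, a symmetric operator
of finite rank restricts to an injective symmetric operator on its range, so the spectral theorem
there diagonalises it with nonzero eigenvalues only.
-/

open Module End Submodule

section Eigenvectors

theorem span_nonzero_eigenvectors_le_range {K M : Type*} [DivisionSemiring K] [AddCommMonoid M]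
    [Module K M] (T : M →ₗ[K] M) :
    span K {x | ∃ a : K, a ≠ 0 ∧ T x = a • x} ≤ T.range := by
  rw [span_le]
  rintro x ⟨a, ha, hx⟩
  exact ⟨a⁻¹ • x, by rw [map_smul, hx, inv_smul_smul₀ ha]⟩

variable {𝕜 E : Type*} [RCLike 𝕜] [NormedAddCommGroup E] [InnerProductSpace 𝕜 E]
  {T : E →ₗ[𝕜] E}

theorem disjoint_range_ker_of_isSymmetric (hT : T.IsSymmetric) : Disjoint T.range T.ker := by
  rw [← hT.orthogonal_range]
  exact T.range.orthogonal_disjoint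

theorem span_nonzero_eigenvectors_eq_range (hT : T.IsSymmetric) [FiniteDimensional 𝕜 T.range] :
    span 𝕜 {x | ∃ a : 𝕜, a ≠ 0 ∧ T x = a • x} = T.range := by
  refine (span_nonzero_eigenvectors_le_range T).antisymm ?_
  have hinv : ∀ x ∈ T.range, T x ∈ T.range := fun x _ => T.mem_range_self x
  let S : End 𝕜 T.range := T.restrict hinv
  have hS : S.IsSymmetric := hT.restrict_invariant hinv
  have hS_zero : eigenspace S 0 = ⊥ :=
    eigenspace_restrict_eq_bot hinv
      (by simpa only [eigenspace_zero] using (disjoint_range_ker_of_isSymmetric hT).symm)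
  have hS_top : ⨆ a, eigenspace S a = ⊤ :=
    orthogonal_eq_bot_iff.mp hS.orthogonalComplement_iSup_eigenspaces_eq_bot
  rw [← map_subtype_top T.range, ← hS_top, Submodule.map_iSup, iSup_le_iff]
  rintro a _ ⟨x, hx, rfl⟩
  obtain rfl | ha := eq_or_ne a 0
  · have hx_zero : x = 0 := by simpa only [hS_zero, SetLike.mem_coe, mem_bot] using hx
    exact hx_zero ▸ zero_mem _
  · exact subset_span ⟨a, ha, congrArg Subtype.val (mem_eigenspace_iff.mp hx)⟩

end Eigenvectors

section FrameOperator

variable {ι 𝕜 E : Type*} [Fintype ι] [RCLike 𝕜] [SeminormedAddCommGroup E]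
  [InnerProductSpace 𝕜 E]

variable (𝕜) in
/-- The frame operator `∑ i, w i • v i ⊗ v i` of the finite family `v`, weighted by `w`. The
corrected operator of the paper is the frame operator of the family of differences `μ i - μ j` with
weights `c i * c j`. The weights are real, also over `ℂ`, so that the operator is symmetric. -/
noncomputable def frameOperator (w : ι → ℝ) (v : ι → E) : E →ₗ[𝕜] E :=
  ∑ i, (w i : 𝕜) • (InnerProductSpace.rankOne 𝕜 (v i) (v i)).toLinearMap

variable (w : ι → ℝ) (v : ι → E)

theorem frameOperator_apply (h : E) :
    frameOperator 𝕜 w v h = ∑ i, ((w i : 𝕜) * inner 𝕜 (v i) h) • v i := by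
  simp [frameOperator, mul_smul]

theorem isSymmetric_frameOperator : (frameOperator 𝕜 w v).IsSymmetric :=
  LinearMap.isSymmetric_sum _ fun i _ =>
    (InnerProductSpace.isSymmetric_rankOne_self (v i)).smul (RCLike.conj_ofReal (w i))

theorem inner_frameOperator_self (h : E) :
    inner 𝕜 h (frameOperator 𝕜 w v h) = ((∑ i, w i * ‖inner 𝕜 (v i) h‖ ^ 2 : ℝ) : 𝕜) := by
  rw [frameOperator_apply, inner_sum]
  push_cast
  refine Finset.sum_congr rfl fun i _ => ?_
  rw [inner_smul_right, mul_assoc, ← inner_conj_symm h, RCLike.mul_conj]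

theorem range_frameOperator_le : (frameOperator 𝕜 w v).range ≤ span 𝕜 (Set.range v) := by
  rintro _ ⟨h, rfl⟩
  rw [frameOperator_apply]
  exact sum_mem fun i _ => smul_mem _ _ (subset_span (Set.mem_range_self i))

instance finiteDimensional_range_frameOperator :
    FiniteDimensional 𝕜 (frameOperator 𝕜 w v).range :=
  have := FiniteDimensional.span_of_finite 𝕜 (Set.finite_range v)
  finiteDimensional_of_le (range_frameOperator_le w v)

variable {w}

theorem frameOperator_eq_zero_iff (hw : ∀ i, 0 < w i) {h : E} :
    frameOperator 𝕜 w v h = 0 ↔ ∀ i, inner 𝕜 (v i) h = 0 := by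
  refine ⟨fun hh i => ?_, fun hh => by simp [frameOperator_apply, hh]⟩
  have hsum : ∑ i, w i * ‖inner 𝕜 (v i) h‖ ^ 2 = 0 := by
    rw [← RCLike.ofReal_eq_zero (K := 𝕜), ← inner_frameOperator_self, hh, inner_zero_right]
  have hterm : w i * ‖inner 𝕜 (v i) h‖ ^ 2 = 0 :=
    (Finset.sum_eq_zero_iff_of_nonneg fun j _ => mul_nonneg (hw j).le (sq_nonneg _)).mp hsum i
      (Finset.mem_univ i)
  simpa [(hw i).ne'] using hterm

end FrameOperator

section FrameOperatorRange

variable {ι 𝕜 E : Type*} [RCLike 𝕜] [NormedAddCommGroup E] [InnerProductSpace 𝕜 E]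

theorem mem_orthogonal_span_iff {s : Set E} {x : E} :
    x ∈ (span 𝕜 s)ᗮ ↔ ∀ u ∈ s, inner 𝕜 u x = 0 := by
  rw [← span_singleton_le_iff_mem, ← isOrtho_iff_le, isOrtho_comm, isOrtho_span]
  simp only [Set.mem_singleton_iff, forall_eq]

variable [Fintype ι] {w : ι → ℝ} (v : ι → E)

theorem ker_frameOperator (hw : ∀ i, 0 < w i) :
    (frameOperator 𝕜 w v).ker = (span 𝕜 (Set.range v))ᗮ := by
  ext h
  rw [LinearMap.mem_ker, frameOperator_eq_zero_iff v hw, mem_orthogonal_span_iff,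
    Set.forall_mem_range]

theorem range_frameOperator (hw : ∀ i, 0 < w i) :
    (frameOperator 𝕜 w v).range = span 𝕜 (Set.range v) := by
  refine (range_frameOperator_le w v).antisymm ?_
  calc span 𝕜 (Set.range v)
      ≤ (span 𝕜 (Set.range v))ᗮᗮ := le_orthogonal_orthogonal _
    _ = (frameOperator 𝕜 w v).kerᗮ := by rw [ker_frameOperator v hw]
    _ = (frameOperator 𝕜 w v).rangeᗮᗮ := by rw [(isSymmetric_frameOperator w v).orthogonal_range]
    _ = (frameOperator 𝕜 w v).range := orthogonal_orthogonal _

end FrameOperatorRange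

theorem stmt6_general {ι 𝕜 H : Type*} [Fintype ι] [RCLike 𝕜] [NormedAddCommGroup H]
    [InnerProductSpace 𝕜 H] (v : ι → H) (w : ι → ℝ) (hw : ∀ i, 0 < w i) (Δ : H → H)
    (hΔ : ∀ h, Δ h = ∑ i, ((w i : 𝕜) * inner 𝕜 (v i) h) • v i) :
    span 𝕜 {h : H | ∃ lam : 𝕜, lam ≠ 0 ∧ Δ h = lam • h} = span 𝕜 (Set.range v) := by
  obtain rfl : Δ = frameOperator 𝕜 w v :=
    funext fun h => (hΔ h).trans (frameOperator_apply w v h).symm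
  rw [span_nonzero_eigenvectors_eq_range (isSymmetric_frameOperator w v), range_frameOperator v hw]

/-- Theorem 2, second part: the eigenvectors of the corrected operator `Δ^kernel`
associated with nonzero eigenvalues span the central distribution deviation subspace
`span {μ i - μ j}`. -/
theorem stmt6 {H : Type*} [NormedAddCommGroup H] [InnerProductSpace ℝ H]
    {s : ℕ} (μ : Fin (s + 1) → H) (c : Fin (s + 1) → ℝ) (hc : ∀ i, 0 < c i)
    (Δ : H → H)
    (hΔ : ∀ h, Δ h = ∑ i : Fin (s + 1), ∑ j : Fin (s + 1),
      (c i * c j * ⟪μ i - μ j, h⟫) • (μ i - μ j)) :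
    Submodule.span ℝ {v : H | ∃ lam : ℝ, lam ≠ 0 ∧ Δ v = lam • v}
      = Submodule.span ℝ {x : H | ∃ i j : Fin (s + 1), x = μ i - μ j} := by
  simpa [Set.range, eq_comm] using
    stmt6_general (fun p : Fin (s + 1) × Fin (s + 1) => μ p.1 - μ p.2) (fun p => c p.1 * c p.2)
      (fun p => mul_pos (hc p.1) (hc p.2)) Δ (fun h => (hΔ h).trans (Fintype.sum_prod_type' _).symm)
end

section
/- Let q, n ∈ ℕ with 1 ≤ q ≤ n−1, let λ_1 ≥ λ_2 ≥ … ≥ λ_n ≥ 0 be reals with λ_q > 0 and λ_k = 0 for all k > q, and let λ̂_1, …, λ̂_n ≥ 0 be reals with |λ̂_k − λ_k| ≤ η for all k, for some η ≥ 0. Let τ ∈ (0,1) and c > 0 satisfy η + c ≤ τ(λ_q − η + c) and η(1+τ) < c(1−τ). Then the thresholding ridge ratio estimator q̂ = max{k ∈ {1, …, n−1} : (λ̂_{k+1} + c)/(λ̂_k + c) ≤ τ} is well defined and equals q. (Deterministic core of Theorem 4: consistency of the TRR estimator of the structural dimension.) -/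
/-!
Consecutive ridge ratios are squeezed by replacing each estimate with the end of its error interval.
At `q` the ratio is at most `(η + c) / (lam q - η + c) ≤ τ`, while beyond `q`, where both
eigenvalues vanish, it is at least `(-η + c) / (η + c)`, which exceeds `τ` exactly when
`η * (1 + τ) < c * (1 - τ)`. So `q` passes the threshold and no later index does.
-/

section Definitions

variable {K : Type*} [Field K]

/-- The ridge ratio of the sequence `a` at the index `k` with ridge `c`: the quantity which the
thresholding ridge ratio estimator compares with its threshold. It is `0` when `a k + c = 0`. -/
def ridgeRatio (c : K) (a : ℕ → K) (k : ℕ) : K :=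
  (a (k + 1) + c) / (a k + c)

/-- The set of indices over which the thresholding ridge ratio estimator maximizes. It ends at
`n - 1` because the ratio at `k` involves the eigenvalue of index `k + 1`. -/
def trrCandidates [LinearOrder K] (n : ℕ) (c τ : K) (a : ℕ → K) : Finset ℕ :=
  (Finset.Icc 1 (n - 1)).filter fun k ↦ ridgeRatio c a k ≤ τ

/-- The thresholding ridge ratio estimator of the structural dimension, computed from estimated
eigenvalues `a 1, …, a n`. It is `⊥` if every ridge ratio exceeds the threshold `τ`. -/
def trrEstimator [LinearOrder K] (n : ℕ) (c τ : K) (a : ℕ → K) : WithBot ℕ :=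
  (trrCandidates n c τ a).max

end Definitions

theorem lt_of_mul_one_add_lt_mul_one_sub {R : Type*} [CommRing R] [LinearOrder R]
    [IsStrictOrderedRing R] {x y t : R} (hx : 0 ≤ x) (ht0 : 0 ≤ t) (ht1 : t ≤ 1)
    (h : x * (1 + t) < y * (1 - t)) : x < y := by
  have hfactor : 1 - t ≤ 1 + t := by linarith
  have hmul : x * (1 - t) < y * (1 - t) := (mul_le_mul_of_nonneg_left hfactor hx).trans_lt h
  exact lt_of_mul_lt_mul_right hmul (sub_nonneg.mpr ht1)

theorem finset_max_eq_of_isGreatest {α : Type*} [LinearOrder α] {s : Finset α} {m : α}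
    (h : IsGreatest (s : Set α) m) : s.max = m :=
  le_antisymm (Finset.max_le fun _ hk ↦ WithBot.coe_le_coe.mpr (h.2 hk)) (Finset.le_max h.1)

theorem isGreatest_trrCandidates {K : Type*} [Field K] [LinearOrder K] {q n : ℕ} {c τ : K}
    {a : ℕ → K} (hq : 1 ≤ q) (hqn : q < n) (hle : ridgeRatio c a q ≤ τ)
    (hlt : ∀ k, q < k → k < n → τ < ridgeRatio c a k) :
    IsGreatest (trrCandidates n c τ a : Set ℕ) q := by
  simp only [IsGreatest, mem_upperBounds, trrCandidates, Finset.mem_coe, Finset.mem_filter,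
    Finset.mem_Icc]
  refine ⟨⟨⟨hq, by lia⟩, hle⟩, fun k ⟨hk, hkτ⟩ ↦ ?_⟩
  by_contra! hqk
  exact (hlt k hqk (Nat.lt_of_le_pred (by lia) hk.2)).not_ge hkτ

section RidgeRatioBounds

variable {K : Type*} [Field K] [LinearOrder K] [IsStrictOrderedRing K]
  {a : ℕ → K} {k : ℕ} {l u c η τ : K}

theorem ridgeRatio_le_div (hu : 0 ≤ u + c) (hl : 0 < l + c) (hsucc : a (k + 1) ≤ u)
    (hk : l ≤ a k) : ridgeRatio c a k ≤ (u + c) / (l + c) :=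
  div_le_div₀ hu (by gcongr) hl (by gcongr)

theorem div_le_ridgeRatio (hl : 0 ≤ l + c) (hpos : 0 < a k + c) (hsucc : l ≤ a (k + 1))
    (hk : a k ≤ u) : (l + c) / (u + c) ≤ ridgeRatio c a k :=
  div_le_div₀ (hl.trans (by gcongr)) (by gcongr) hpos (by gcongr)

theorem ridgeRatio_le_of_le_mul (hτ : 0 ≤ τ) (hu : 0 < u + c) (hsucc : a (k + 1) ≤ u)
    (hk : l ≤ a k) (hgap : u + c ≤ τ * (l + c)) : ridgeRatio c a k ≤ τ := by
  have hl : 0 < l + c := pos_of_mul_pos_right (hu.trans_le hgap) hτ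
  exact (ridgeRatio_le_div hu.le hl hsucc hk).trans ((div_le_iff₀ hl).mpr hgap)

theorem lt_ridgeRatio_of_abs_le (hηc : η < c) (hk : |a k| ≤ η) (hsucc : |a (k + 1)| ≤ η)
    (hsep : η * (1 + τ) < c * (1 - τ)) : τ < ridgeRatio c a k := by
  obtain ⟨hk_lower, hk_upper⟩ := abs_le.mp hk
  have hpos : 0 < a k + c := by linarith
  calc
    τ < (-η + c) / (η + c) := by rw [lt_div_iff₀ (by linarith)]; linarith
    _ ≤ ridgeRatio c a k :=
      div_le_ridgeRatio (by linarith) hpos (abs_le.mp hsucc).1 hk_upper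

end RidgeRatioBounds

theorem stmt10_general {K : Type*} [Field K] [LinearOrder K] [IsStrictOrderedRing K]
    {q n : ℕ} (hq : 1 ≤ q) (hqn : q < n) {lam hatlam : ℕ → K} {η τ c : K}
    (hzero : ∀ k, q < k → k ≤ n → lam k = 0)
    (hclose : ∀ k, q ≤ k → k ≤ n → |hatlam k - lam k| ≤ η)
    (hτ0 : 0 < τ) (hτ1 : τ < 1)
    (hgap : η + c ≤ τ * (lam q - η + c)) (hsep : η * (1 + τ) < c * (1 - τ)) :
    (trrCandidates n c τ hatlam).Nonempty ∧ trrEstimator n c τ hatlam = q := by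
  have hη : 0 ≤ η := (abs_nonneg _).trans (hclose q le_rfl hqn.le)
  have hηc : η < c := lt_of_mul_one_add_lt_mul_one_sub hη hτ0.le hτ1.le hsep
  have hnoise : ∀ k, q < k → k ≤ n → |hatlam k| ≤ η := fun k hqk hkn ↦ by
    simpa only [hzero k hqk hkn, sub_zero] using hclose k hqk.le hkn
  have hsignal : lam q - η ≤ hatlam q :=
    sub_le_of_abs_sub_le_left (hclose q le_rfl hqn.le)
  have hle : ridgeRatio c hatlam q ≤ τ :=
    ridgeRatio_le_of_le_mul hτ0.le (by linarith) (abs_le.mp (hnoise _ q.lt_succ_self hqn)).2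
      hsignal hgap
  have hlt : ∀ k, q < k → k < n → τ < ridgeRatio c hatlam k := fun k hqk hkn ↦
    lt_ridgeRatio_of_abs_le hηc (hnoise k hqk hkn.le) (hnoise (k + 1) (by lia) hkn) hsep
  have hgreatest := isGreatest_trrCandidates hq hqn hle hlt
  exact ⟨⟨q, hgreatest.1⟩, finset_max_eq_of_isGreatest hgreatest⟩

/-- Deterministic core of Theorem 4: consistency of the thresholding ridge ratio (TRR)
estimator of the structural dimension. Eigenvalues are indexed by `1, …, n`. -/
theorem stmt10 {q n : ℕ} (hq1 : 1 ≤ q) (hq2 : q ≤ n - 1) (hn : 2 ≤ n)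
    (lam hatlam : ℕ → ℝ) {η : ℝ} (hη : 0 ≤ η)
    (hmono : ∀ k l, 1 ≤ k → k ≤ l → l ≤ n → lam l ≤ lam k)
    (hnn : ∀ k, 1 ≤ k → k ≤ n → 0 ≤ lam k)
    (hposq : 0 < lam q)
    (hzero : ∀ k, q < k → k ≤ n → lam k = 0)
    (hhatnn : ∀ k, 1 ≤ k → k ≤ n → 0 ≤ hatlam k)
    (hclose : ∀ k, 1 ≤ k → k ≤ n → |hatlam k - lam k| ≤ η)
    {τ c : ℝ} (hτ0 : 0 < τ) (hτ1 : τ < 1) (hc : 0 < c)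
    (hgap : η + c ≤ τ * (lam q - η + c))
    (hsep : η * (1 + τ) < c * (1 - τ)) :
    ((Finset.Icc 1 (n - 1)).filter
        (fun k => (hatlam (k + 1) + c) / (hatlam k + c) ≤ τ)).Nonempty ∧
    ((Finset.Icc 1 (n - 1)).filter
        (fun k => (hatlam (k + 1) + c) / (hatlam k + c) ≤ τ)).max = (q : WithBot ℕ) := by
  exact stmt10_general hq1 (by lia) hzero (fun k hqk hkn ↦ hclose k (hq1.trans hqk) hkn)
    hτ0 hτ1 hgap hsep
end
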